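/- (Theorem 1, quantitative form.) Let X ∈ ℝ^{N×d_x}, Y ∈ ℝ^{N×d_y}, U* ∈ ℝ^{d_x×k}, V* ∈ ℝ^{d_y×k}, and let X̂ ∈ ℝ^{N×d_x}, Ŷ ∈ ℝ^{N×d_y}. Write X_u = X U*, Y_v = Y V*, X̂_u = X̂ U*, Ŷ_v = Ŷ V*, and let Λ > 0. Suppose the reconstruction errors satisfy ‖X̂_u − X_u‖_F ≤ min( √(2k)·‖I_k − C(X̂_u)‖₂ , 2‖I_k − C(X̂_u)‖₂² / Λ ) and ‖Ŷ_v − Y_v‖_F ≤ min( √(2k)·‖I_k − C(Ŷ_v)‖₂ , 2‖I_k − C(Ŷ_v)‖₂² / Λ ), where C(A) = (1/N) A^T A. Then the approximation error E = (1/N)·|trace((U*)^T X̂^T Ŷ V*) − trace((U*)^T X^T Y V*)| satisfies E ≤ min( √(2k)‖I_k − C(X̂_u)‖₂ , 2‖I_k − C(X̂_u)‖₂²/Λ ) · min( √(2k)‖I_k − C(Ŷ_v)‖₂ , 2‖I_k − C(Ŷ_v)‖₂²/Λ ) + min( √(2k)‖I_k − C(X̂_u)‖₂ , 2‖I_k −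 C(X̂_u)‖₂²/Λ ) · ‖Y_v‖_F + min( √(2k)‖I_k − C(Ŷ_v)‖₂ , 2‖I_k − C(Ŷ_v)‖₂²/Λ ) · ‖X_u‖_F. In particular, E → 0 as C(X̂_u) → I_k and C(Ŷ_v) → I_k. -/

import Mathlib

/-!
Write `A = X U*`, `B = Y V*` for the projected data and `P`, `Q` for the reconstruction errors
`X̂ U* - A`, `Ŷ V* - B`. The trace pairing `⟨A, B⟩ = tr (Aᵀ B)` is the Frobenius inner product, and
`⟨A + P, B + Q⟩ - ⟨A, B⟩ = ⟨P, Q⟩ + ⟨P, B⟩ + ⟨A, Q⟩`.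
Cauchy–Schwarz (`abs_trace_transpose_mul_le`) bounds each of the three terms by a product of
Frobenius norms; the assumed bounds on `‖P‖_F` and `‖Q‖_F` then give the claim, the prefactor
`1/N` being at most `1`.
-/

open scoped Matrix

/-- The Frobenius norm of a real matrix: the square root of the sum of squares of entries. -/
noncomputable def frobNorm {m n : ℕ} (A : Matrix (Fin m) (Fin n) ℝ) : ℝ :=
  Real.sqrt (∑ i, ∑ j, (A i j) ^ 2)

/-- The spectral (operator) norm of a real square matrix, i.e. the operator norm of the
induced continuous linear endomorphism of Euclidean space. -/
noncomputable def specNorm {d : ℕ} (A : Matrix (Fin d) (Fin d) ℝ) : ℝ :=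
  ‖Matrix.toEuclideanCLM (𝕜 := ℝ) A‖

/-- The empirical covariance `C(A) = (1/N) Aᵀ A` of a data matrix `A ∈ ℝ^{N×k}`. -/
noncomputable def cov {N k : ℕ} (A : Matrix (Fin N) (Fin k) ℝ) : Matrix (Fin k) (Fin k) ℝ :=
  (N : ℝ)⁻¹ • (Aᵀ * A)

theorem frobNorm_nonneg {m n : ℕ} (A : Matrix (Fin m) (Fin n) ℝ) : 0 ≤ frobNorm A :=
  Real.sqrt_nonneg _

/-- The Cauchy–Schwarz inequality for the Frobenius inner product `tr (Aᵀ B)`. -/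
theorem abs_trace_transpose_mul_le {m n : ℕ} (A B : Matrix (Fin m) (Fin n) ℝ) :
    |Matrix.trace (Aᵀ * B)| ≤ frobNorm A * frobNorm B := by
  have htr : Matrix.trace (Aᵀ * B) = ∑ p : Fin m × Fin n, A p.1 p.2 * B p.1 p.2 := by
    rw [Fintype.sum_prod_type, Finset.sum_comm]
    simp [Matrix.trace, Matrix.mul_apply]
  have hcs := Finset.sum_mul_sq_le_sq_mul_sq (Finset.univ : Finset (Fin m × Fin n))
    (fun p => A p.1 p.2) (fun p => B p.1 p.2)
  unfold frobNorm
  rw [htr, ← Real.sqrt_mul (by positivity)]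
  apply Real.abs_le_sqrt
  simpa only [Fintype.sum_prod_type] using hcs

/-- Theorem 1 (quantitative form).  If the PCA reconstruction errors of the projected
data satisfy the bounds supplied by Proposition 1 (with eigengap lower bound `Λ > 0`),
then the CCA approximation error
`E = (1/N)|trace((U*)ᵀ X̂ᵀ Ŷ V*) − trace((U*)ᵀ Xᵀ Y V*)|` satisfies the stated bound. -/
theorem thm1_quantitative {N dx dy k : ℕ} (hN : 0 < N)
    (X : Matrix (Fin N) (Fin dx) ℝ) (Y : Matrix (Fin N) (Fin dy) ℝ)
    (Ustar : Matrix (Fin dx) (Fin k) ℝ) (Vstar : Matrix (Fin dy) (Fin k) ℝ)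
    (Xhat : Matrix (Fin N) (Fin dx) ℝ) (Yhat : Matrix (Fin N) (Fin dy) ℝ)
    (Λ : ℝ) (hΛ : 0 < Λ)
    (hx : frobNorm (Xhat * Ustar - X * Ustar) ≤
      min (Real.sqrt (2 * k) * specNorm (1 - cov (Xhat * Ustar)))
        (2 * specNorm (1 - cov (Xhat * Ustar)) ^ 2 / Λ))
    (hy : frobNorm (Yhat * Vstar - Y * Vstar) ≤
      min (Real.sqrt (2 * k) * specNorm (1 - cov (Yhat * Vstar)))
        (2 * specNorm (1 - cov (Yhat * Vstar)) ^ 2 / Λ)) :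
    (N : ℝ)⁻¹ *
        |Matrix.trace (Ustarᵀ * Xhatᵀ * Yhat * Vstar) -
          Matrix.trace (Ustarᵀ * Xᵀ * Y * Vstar)| ≤
      min (Real.sqrt (2 * k) * specNorm (1 - cov (Xhat * Ustar)))
          (2 * specNorm (1 - cov (Xhat * Ustar)) ^ 2 / Λ) *
        min (Real.sqrt (2 * k) * specNorm (1 - cov (Yhat * Vstar)))
          (2 * specNorm (1 - cov (Yhat * Vstar)) ^ 2 / Λ) +
      min (Real.sqrt (2 * k) * specNorm (1 - cov (Xhat * Ustar)))
          (2 * specNorm (1 - cov (Xhat * Ustar)) ^ 2 / Λ) * frobNorm (Y * Vstar) +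
      min (Real.sqrt (2 * k) * specNorm (1 - cov (Yhat * Vstar)))
          (2 * specNorm (1 - cov (Yhat * Vstar)) ^ 2 / Λ) * frobNorm (X * Ustar) := by
  generalize min (Real.sqrt (2 * k) * specNorm (1 - cov (Xhat * Ustar)))
    (2 * specNorm (1 - cov (Xhat * Ustar)) ^ 2 / Λ) = a at hx ⊢
  generalize min (Real.sqrt (2 * k) * specNorm (1 - cov (Yhat * Vstar)))
    (2 * specNorm (1 - cov (Yhat * Vstar)) ^ 2 / Λ) = b at hy ⊢
  have hexpand : Matrix.trace (Ustarᵀ * Xhatᵀ * Yhat * Vstar) -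
      Matrix.trace (Ustarᵀ * Xᵀ * Y * Vstar) =
      Matrix.trace ((Xhat * Ustar - X * Ustar)ᵀ * (Yhat * Vstar - Y * Vstar)) +
      Matrix.trace ((Xhat * Ustar - X * Ustar)ᵀ * (Y * Vstar)) +
      Matrix.trace ((X * Ustar)ᵀ * (Yhat * Vstar - Y * Vstar)) := by
    simp only [Matrix.transpose_sub, Matrix.transpose_mul, Matrix.sub_mul, Matrix.mul_sub,
      Matrix.trace_sub, Matrix.mul_assoc]
    ring
  rw [hexpand]
  set P := Xhat * Ustar - X * Ustar
  set Q := Yhat * Vstar - Y * Vstar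
  have ha : 0 ≤ a := (frobNorm_nonneg P).trans hx
  have h1 : |Matrix.trace (Pᵀ * Q)| ≤ a * b :=
    (abs_trace_transpose_mul_le _ _).trans (mul_le_mul hx hy (frobNorm_nonneg _) ha)
  have h2 : |Matrix.trace (Pᵀ * (Y * Vstar))| ≤ a * frobNorm (Y * Vstar) :=
    (abs_trace_transpose_mul_le _ _).trans (mul_le_mul_of_nonneg_right hx (frobNorm_nonneg _))
  have h3 : |Matrix.trace ((X * Ustar)ᵀ * Q)| ≤ b * frobNorm (X * Ustar) := by
    rw [mul_comm b]
    exact (abs_trace_transpose_mul_le _ _).trans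
      (mul_le_mul_of_nonneg_left hy (frobNorm_nonneg _))
  have hN1 : (N : ℝ)⁻¹ ≤ 1 := inv_le_one_of_one_le₀ (by exact_mod_cast hN)
  exact (mul_le_of_le_one_left (abs_nonneg _) hN1).trans
    ((abs_add_three _ _ _).trans (add_le_add (add_le_add h1 h2) h3))
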